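/- Super-fidelity is super-multiplicative: for density matrices A, B, C, D, G(A⊗B, C⊗D) ≥ G(A,C)·G(B,D), where G(X,Y) = tr(XY) + √((1-tr X²)(1-tr Y²)). -/

import Mathlib

open Matrix Kronecker ComplexOrder

/-- Super-fidelity `G(X,Y) = tr(XY) + √((1-tr X²)(1-tr Y²))`. -/
noncomputable def supFid {n : Type*} [Fintype n] (X Y : Matrix n n ℂ) : ℝ :=
  ((X * Y).trace).re +
    Real.sqrt ((1 - ((X * X).trace).re) * (1 - ((Y * Y).trace).re))

lemma sf_cs {ι : Type*} [Fintype ι] (f g : ι → ℂ) :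
    ‖∑ i, f i * g i‖ ^ 2 ≤ (∑ i, ‖f i‖ ^ 2) * (∑ i, ‖g i‖ ^ 2) := by
  have h1 : ‖∑ i, f i * g i‖ ≤ ∑ i, ‖f i‖ * ‖g i‖ := by
    refine (norm_sum_le _ _).trans (le_of_eq ?_)
    simp
  calc ‖∑ i, f i * g i‖ ^ 2 ≤ (∑ i, ‖f i‖ * ‖g i‖) ^ 2 := by gcongr
    _ ≤ _ := Finset.sum_mul_sq_le_sq_mul_sq _ _ _

lemma sf_norm_symm {n : Type*} {A : Matrix n n ℂ} (hA : A.IsHermitian) (i j : n) :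
    ‖A i j‖ = ‖A j i‖ := by
  rw [← hA.apply i j, norm_star]

lemma sf_trace_sq {n : Type*} [Fintype n] {A : Matrix n n ℂ} (hA : A.IsHermitian) :
    (A * A).trace = ((∑ p : n × n, ‖A p.1 p.2‖ ^ 2 : ℝ) : ℂ) := by
  rw [Fintype.sum_prod_type]
  simp only [Matrix.trace, Matrix.diag, Matrix.mul_apply]
  push_cast
  refine Finset.sum_congr rfl fun i _ => Finset.sum_congr rfl fun j _ => ?_
  rw [← hA.apply j i]
  exact Complex.mul_conj' _

lemma sf_trace_im {n : Type*} [Fintype n] {A C : Matrix n n ℂ} (hA : A.IsHermitian)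
    (hC : C.IsHermitian) : ((A * C).trace).im = 0 := by
  have h : star (A * C).trace = (A * C).trace := by
    rw [← Matrix.trace_conjTranspose, Matrix.conjTranspose_mul, hA.eq, hC.eq, Matrix.trace_mul_comm]
  exact Complex.conj_eq_iff_im.mp h

lemma sf_trace_cs {n : Type*} [Fintype n] {A C : Matrix n n ℂ} (hA : A.IsHermitian)
    (hC : C.IsHermitian) :
    ((A * C).trace).re ^ 2 ≤ ((A * A).trace).re * ((C * C).trace).re := by
  rw [sf_trace_sq hA, sf_trace_sq hC, Complex.ofReal_re, Complex.ofReal_re]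
  have h := sf_cs (fun p : n × n => A p.1 p.2) (fun p => C p.2 p.1)
  have e : ∑ p : n × n, A p.1 p.2 * C p.2 p.1 = (A * C).trace := by
    rw [Fintype.sum_prod_type]; rfl
  rw [e] at h
  simp only [fun p : n × n => sf_norm_symm hC p.2 p.1] at h
  refine le_trans ?_ h
  rw [← sq_abs]
  gcongr
  exact Complex.abs_re_le_norm _

lemma sf_trace_nonneg {n : Type*} [Fintype n] {A : Matrix n n ℂ} (hA : A.IsHermitian) :
    0 ≤ ((A * A).trace).re := by
  rw [sf_trace_sq hA, Complex.ofReal_re]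
  positivity

lemma sf_trace_le_one {n : Type*} [Fintype n] [DecidableEq n] {A : Matrix n n ℂ}
    (hA : A.PosSemidef) (t : A.trace = 1) : ((A * A).trace).re ≤ 1 := by
  rw [sf_trace_sq hA.isHermitian, Complex.ofReal_re]
  obtain ⟨S, rfl⟩ : ∃ S : Matrix n n ℂ, A = Sᴴ * S := by
    open scoped MatrixOrder in
    exact CStarAlgebra.nonneg_iff_eq_star_mul_self.mp hA.nonneg
  have ht : ∑ i, ∑ k, ‖S k i‖ ^ 2 = (1 : ℝ) := by
    have : ((∑ i, ∑ k, ‖S k i‖ ^ 2 : ℝ) : ℂ) = 1 := by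
      rw [← t]
      simp only [Matrix.trace, Matrix.diag, Matrix.mul_apply, Matrix.conjTranspose_apply]
      push_cast
      refine Finset.sum_congr rfl fun i _ => Finset.sum_congr rfl fun j _ => ?_
      exact (Complex.conj_mul' _).symm
    exact_mod_cast this
  rw [Fintype.sum_prod_type]
  calc ∑ i, ∑ j, ‖(Sᴴ * S) i j‖ ^ 2
      ≤ ∑ i, ∑ j, (∑ k, ‖S k i‖ ^ 2) * (∑ k, ‖S k j‖ ^ 2) := by
        refine Finset.sum_le_sum fun i _ => Finset.sum_le_sum fun j _ => ?_
        have := sf_cs (fun k => star (S k i)) (fun k => S k j)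
        simpa only [norm_star, Matrix.mul_apply, Matrix.conjTranspose_apply] using this
    _ = 1 := by
        rw [← Finset.sum_mul_sum, ht, one_mul]

lemma sf_real {a b c d x y : ℝ} (a0 : 0 ≤ a) (b0 : 0 ≤ b) (c0 : 0 ≤ c) (d0 : 0 ≤ d)
    (a1 : a ≤ 1) (b1 : b ≤ 1) (c1 : c ≤ 1) (d1 : d ≤ 1)
    (hx : x ^ 2 ≤ a * c) (hy : y ^ 2 ≤ b * d) :
    (x + √((1 - a) * (1 - c))) * (y + √((1 - b) * (1 - d))) ≤
      x * y + √((1 - a * b) * (1 - c * d)) := by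
  have hx' : x ≤ √a * √c := by
    rw [← Real.sqrt_mul a0]; exact Real.le_sqrt_of_sq_le hx
  have hy' : y ≤ √b * √d := by
    rw [← Real.sqrt_mul b0]; exact Real.le_sqrt_of_sq_le hy
  rw [Real.sqrt_mul (by linarith : 0 ≤ 1 - a), Real.sqrt_mul (by linarith : 0 ≤ 1 - b)]
  have ea := Real.sq_sqrt a0
  have eb := Real.sq_sqrt b0
  have ec := Real.sq_sqrt c0
  have ed := Real.sq_sqrt d0
  have fa := Real.sq_sqrt (by linarith : 0 ≤ 1 - a)
  have fb := Real.sq_sqrt (by linarith : 0 ≤ 1 - b)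
  have fc := Real.sq_sqrt (by linarith : 0 ≤ 1 - c)
  have fd := Real.sq_sqrt (by linarith : 0 ≤ 1 - d)
  have na := Real.sqrt_nonneg (1 - a)
  have nb := Real.sqrt_nonneg (1 - b)
  have nc := Real.sqrt_nonneg (1 - c)
  have nd := Real.sqrt_nonneg (1 - d)
  set A := √a
  set B := √b
  set C := √c
  set D := √d
  set P := √(1 - a)
  set Q := √(1 - b)
  set R := √(1 - c)
  set S := √(1 - d)
  have key : (A * Q) * (C * S) + (B * P) * (D * R) + (P * Q) * (R * S) ≤
      √((1 - a * b) * (1 - c * d)) := by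
    apply Real.le_sqrt_of_sq_le
    have e1 : 1 - a * b = (A * Q) ^ 2 + (B * P) ^ 2 + (P * Q) ^ 2 := by
      simp only [mul_pow, ea, eb, fa, fb]; ring
    have e2 : 1 - c * d = (C * S) ^ 2 + (D * R) ^ 2 + (R * S) ^ 2 := by
      simp only [mul_pow, ec, ed, fc, fd]; ring
    rw [e1, e2]
    generalize A * Q = u1
    generalize B * P = u2
    generalize P * Q = u3
    generalize C * S = v1
    generalize D * R = v2
    generalize R * S = v3
    nlinarith [sq_nonneg (u1 * v2 - u2 * v1), sq_nonneg (u1 * v3 - u3 * v1),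
      sq_nonneg (u2 * v3 - u3 * v2)]
  have h1 := mul_le_mul_of_nonneg_right hx' (mul_nonneg nb nd)
  have h2 := mul_le_mul_of_nonneg_right hy' (mul_nonneg na nc)
  linarith

theorem superFidelity_superMultiplicative {N M : ℕ}
    (A C : Matrix (Fin N) (Fin N) ℂ) (B D : Matrix (Fin M) (Fin M) ℂ)
    (hA : A.PosSemidef) (hB : B.PosSemidef) (hC : C.PosSemidef) (hD : D.PosSemidef)
    (tA : A.trace = 1) (tB : B.trace = 1) (tC : C.trace = 1) (tD : D.trace = 1) :
    supFid (A ⊗ₖ B) (C ⊗ₖ D) ≥ supFid A C * supFid B D := by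
  have hA' := hA.isHermitian
  have hB' := hB.isHermitian
  have hC' := hC.isHermitian
  have hD' := hD.isHermitian
  unfold supFid
  simp only [← Matrix.mul_kronecker_mul, Matrix.trace_kronecker, Complex.mul_re,
    sf_trace_im hA' hC', sf_trace_im hA' hA', sf_trace_im hC' hC', zero_mul, sub_zero]
  exact sf_real (sf_trace_nonneg hA') (sf_trace_nonneg hB') (sf_trace_nonneg hC')
    (sf_trace_nonneg hD') (sf_trace_le_one hA tA) (sf_trace_le_one hB tB)
    (sf_trace_le_one hC tC) (sf_trace_le_one hD tD) (sf_trace_cs hA' hC') (sf_trace_cs hB' hD')
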